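/- Let p be a positive integer and let h : ℕ₀ → ℂ be any function. Then Σ_{j=0}^{p} φ(p−j) ε_{p−j} Σ_{ξ=0}^{j} h(j−ξ) (−iπ/2)^ξ/ξ! = (1/2) Σ_{ξ=0}^{p} Λ(ξ;i) h(p−ξ), and Σ_{j=0}^{p} φ(p−j) ε_{p−j} Σ_{ξ=0}^{j} h(j−ξ) (iπ/2)^ξ/ξ! = (1/2) Σ_{ξ=0}^{p} Λ(ξ;−i) h(p−ξ). -/

import Mathlib

open Complex Finset Real

/-- `φ(s) = (2^{1-s} - 1) ζ(s)` for `s ≠ 1`, and `φ(1) := -log 2`. -/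
noncomputable def phi (s : ℂ) : ℂ :=
  if s = 1 then -(Real.log 2 : ℂ) else ((2 : ℂ) ^ ((1 : ℂ) - s) - 1) * riemannZeta s

/-- `ε_m = (1 + (-1)^m)/2`. -/
noncomputable def eps (m : ℕ) : ℂ := (1 + (-1 : ℂ) ^ m) / 2

/-- The primitive Dirichlet character of conductor 4 with values in `ℂ`. -/
noncomputable def chi4 : DirichletCharacter ℂ 4 := ZMod.χ₄.ringHomComp (Int.castRingHom ℂ)

/-- `L(s,χ₄)`, equal to `Σ_{m ≥ 0} (-1)^m (2m+1)^{-s}` at the relevant arguments. -/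
noncomputable def Lchi4 (s : ℂ) : ℂ := DirichletCharacter.LFunction chi4 s

/-- `Λ(ξ;i)`: equal to `2^{1-ξ}(2^{1-ξ}-1)ζ(ξ)` for even `ξ`, and to
`2i L(ξ,χ₄)` for odd `ξ`. -/
noncomputable def LamI (ξ : ℕ) : ℂ :=
  if Even ξ then (2 : ℂ) ^ ((1 : ℤ) - ξ) * ((2 : ℂ) ^ ((1 : ℤ) - ξ) - 1) * riemannZeta ξ
  else 2 * Complex.I * Lchi4 ξ

/-- `Λ(ξ;-i)`: equal to `2^{1-ξ}(2^{1-ξ}-1)ζ(ξ)` for even `ξ`, and to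
`-2i L(ξ,χ₄)` for odd `ξ`. -/
noncomputable def LamNegI (ξ : ℕ) : ℂ :=
  if Even ξ then (2 : ℂ) ^ ((1 : ℤ) - ξ) * ((2 : ℂ) ^ ((1 : ℤ) - ξ) - 1) * riemannZeta ξ
  else -(2 * Complex.I * Lchi4 ξ)


noncomputable def bb (n : ℕ) (x : ℂ) : ℂ := Polynomial.aeval x (Polynomial.bernoulli n)

lemma bb_real (n : ℕ) (x : ℝ) : ((bernoulliFun n x : ℝ) : ℂ) = bb n (x : ℂ) := by
  unfold bernoulliFun bb
  rw [Polynomial.eval_map_algebraMap]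
  exact (Polynomial.aeval_algebraMap_apply ℂ x (Polynomial.bernoulli n)).symm

lemma bb_add (n : ℕ) (t s : ℂ) :
    bb n (t + s) / (n.factorial : ℂ) =
      ∑ k ∈ range (n + 1), bb (n - k) t / ((n - k).factorial : ℂ) * (s ^ k / (k.factorial : ℂ)) := by
  have h1 := Polynomial.bernoulli_generating_function (A := ℂ) t
  have h2 := Polynomial.bernoulli_generating_function (A := ℂ) (t + s)
  have h3 := PowerSeries.exp_mul_exp_eq_exp_add (A := ℂ) t s
  have hne : PowerSeries.exp ℂ - 1 ≠ 0 := by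
    intro h
    have := congrArg (PowerSeries.coeff 1) h
    simp [PowerSeries.coeff_one, PowerSeries.coeff_exp] at this
  rw [← h3, ← mul_assoc, ← h1, mul_right_comm] at h2
  have h4 := congrArg (PowerSeries.coeff n) (mul_right_cancel₀ hne h2)
  rw [PowerSeries.coeff_mk, mul_comm, PowerSeries.coeff_mul,
    Finset.Nat.sum_antidiagonal_eq_sum_range_succ_mk] at h4
  simp only [PowerSeries.coeff_rescale, PowerSeries.coeff_exp, PowerSeries.coeff_mk, Algebra.smul_def, map_mul,
    one_div, Polynomial.algebraMap_eq, Polynomial.aeval_C, map_inv₀, map_natCast] at h4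
  unfold bb
  rw [div_eq_inv_mul, h4]
  refine Finset.sum_congr rfl fun k _ => ?_
  ring

lemma bb_half (n : ℕ) : bb n (1 / 2) = (2 / 2 ^ n - 1) * (bernoulli n : ℂ) := by
  have := bb_real n 2⁻¹
  rw [bernoulliFun_eval_half] at this
  push_cast at this
  rw [one_div, ← this]

lemma bb_one_sub (n : ℕ) : bb n (3 / 4) = (-1) ^ n * bb n (1 / 4) := by
  have h := bernoulliFun_eval_one_sub (k := n) (x := 1 / 4)
  have h1 := bb_real n (1 / 4)
  have h2 := bb_real n (1 - 1 / 4)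
  rw [h] at h2
  push_cast at h1 h2
  rw [h1] at h2
  rw [h2]; norm_num

lemma bb_quarter_even (k : ℕ) :
    bb (2 * k) (1 / 4) = (2 / 2 ^ (2 * k) - 1) * (bernoulli (2 * k) : ℂ) / 2 ^ (2 * k) := by
  have h := bernoulliFun_mul (2 * k) two_ne_zero (1 / 4)
  have h1 := congrArg (fun x : ℝ => (x : ℂ)) h
  simp only [Finset.sum_range_succ, Finset.sum_range_zero] at h1
  push_cast [bb_real] at h1
  norm_num at h1
  rw [bb_half, bb_one_sub, pow_mul (-1 : ℂ)] at h1
  norm_num at h1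
  rw [eq_div_iff (pow_ne_zero _ two_ne_zero), h1]
  ring

lemma phi_eps (m : ℕ) :
    phi (m : ℂ) * eps m = -(2 * π * Complex.I) ^ m / 2 * (bb m (1 / 2) / (m.factorial : ℂ)) := by
  rw [bb_half]
  rcases Nat.even_or_odd' m with ⟨k, rfl | rfl⟩
  · have hz := riemannZeta_two_mul_nat' (k := k)
    have h1 : ((2 * k : ℕ) : ℂ) ≠ 1 := by norm_cast; omega
    have h2 : (2 : ℂ) ^ ((1 : ℂ) - (2 * k : ℕ)) = 2 / 2 ^ (2 * k) := by
      rw [Complex.cpow_sub _ _ two_ne_zero, Complex.cpow_one, Complex.cpow_natCast]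
    rw [phi, if_neg h1, h2]
    push_cast
    rw [hz, zpow_sub₀ two_ne_zero, eps, pow_mul (-1 : ℂ)]
    have h3 : (2 * π * Complex.I : ℂ) ^ (2 * k) = 2 ^ (2 * k) * π ^ (2 * k) * (-1) ^ k := by
      rw [mul_pow, mul_pow, pow_mul Complex.I, Complex.I_sq]
    have h4 : (2 : ℂ) ^ (2 * (k : ℤ)) = 2 ^ (2 * k) := by norm_cast
    rw [h3, h4, pow_succ, zpow_one]
    norm_num
    ring
  · rcases Nat.eq_zero_or_pos k with rfl | hk
    · simp [eps]
    · rw [bernoulli_eq_zero_of_odd ⟨k, rfl⟩ (by omega)]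
      simp [eps, pow_succ]

lemma sum_phi (n : ℕ) (s : ℂ) :
    ∑ k ∈ range (n + 1), phi ((n - k : ℕ) : ℂ) * eps (n - k) *
      ((2 * π * Complex.I * s) ^ k / (k.factorial : ℂ)) =
    -(2 * π * Complex.I) ^ n / 2 * (bb n (1 / 2 + s) / (n.factorial : ℂ)) := by
  rw [bb_add, Finset.mul_sum]
  refine Finset.sum_congr rfl fun k hk => ?_
  rw [phi_eps]
  have : n = (n - k) + k := by have := Finset.mem_range.1 hk; omega
  conv_rhs => rw [show (2 * π * Complex.I) ^ n = (2 * π * Complex.I) ^ (n - k) * (2 * π * Complex.I) ^ k by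
    rw [← pow_add, ← this]]
  rw [mul_pow]
  ring

lemma rearr (p : ℕ) (a c h : ℕ → ℂ) :
    ∑ j ∈ range (p + 1), a (p - j) * ∑ ξ ∈ range (j + 1), h (j - ξ) * c ξ =
    ∑ n ∈ range (p + 1), (∑ k ∈ range (n + 1), a (n - k) * c k) * h (p - n) := by
  have h1 : (PowerSeries.mk a * (PowerSeries.mk c * PowerSeries.mk h)) =
    (PowerSeries.mk c * PowerSeries.mk a) * PowerSeries.mk h := by ring
  have h2 := congrArg (PowerSeries.coeff p) h1
  rw [mul_comm (PowerSeries.mk a)] at h2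
  simp only [PowerSeries.coeff_mul, Finset.Nat.sum_antidiagonal_eq_sum_range_succ_mk,
    PowerSeries.coeff_mk] at h2
  calc _ = _ := ?_
    _ = _ := h2
    _ = _ := ?_
  · refine Finset.sum_congr rfl fun j _ => ?_
    rw [mul_comm]
    congr 1
    exact Finset.sum_congr rfl fun _ _ => mul_comm _ _
  · refine Finset.sum_congr rfl fun j _ => ?_
    congr 1
    exact Finset.sum_congr rfl fun _ _ => mul_comm _ _

lemma chi4_odd (k : ℕ) : chi4 ((2 * k + 1 : ℕ) : ZMod 4) = (-1) ^ k := by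
  unfold chi4
  rw [MulChar.ringHomComp_apply, ZMod.χ₄_eq_neg_one_pow (by omega)]
  rw [show (2 * k + 1) / 2 = k by omega]
  simp

lemma chi4_even (k : ℕ) : chi4 ((2 * k : ℕ) : ZMod 4) = 0 := by
  unfold chi4
  rw [MulChar.ringHomComp_apply, ZMod.χ₄_nat_eq_if_mod_four]
  simp

lemma chi4_ne_one : chi4 ≠ 1 := by
  intro h
  have h1 := chi4_odd 1
  rw [h] at h1
  rw [MulChar.one_apply (by decide)] at h1
  norm_num at h1

/-- The Dirichlet series over odd integers. -/
lemma hasSum_Lchi4 (s : ℝ) (hs : 1 < s) :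
    HasSum (fun k : ℕ => (((-1 : ℝ) ^ k * (1 / (2 * k + 1 : ℝ) ^ s) : ℝ) : ℂ)) (Lchi4 s) := by
  have hs' : 1 < (s : ℂ).re := by simpa using hs
  have h0 : (s : ℂ) ≠ 0 := by norm_cast; linarith
  have h1 : LSeriesHasSum (chi4 ·) s (Lchi4 s) := by
    unfold Lchi4
    rw [DirichletCharacter.LFunction_eq_LSeries _ hs']
    exact (DirichletCharacter.LSeriesSummable_of_one_lt_re chi4 hs').LSeriesHasSum
  have hinj : Function.Injective (fun k : ℕ => 2 * k + 1) := fun a b h => by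
    simp only at h; omega
  unfold LSeriesHasSum at h1
  rw [← hinj.hasSum_iff] at h1
  · refine h1.congr_fun fun k => ?_
    simp only [Function.comp]
    rw [LSeries.term_of_ne_zero (by omega), chi4_odd]
    push_cast
    rw [Complex.ofReal_cpow (by positivity)]
    push_cast
    ring
  · intro n hn
    have : ∃ k, n = 2 * k := by
      rcases Nat.even_or_odd' n with ⟨k, h | h⟩
      · exact ⟨k, h⟩
      · exact absurd ⟨k, h.symm⟩ hn
    obtain ⟨k, rfl⟩ := this
    rw [LSeries.term_def, chi4_even]
    simp

open Filter Topology in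
lemma Lchi4_one : Lchi4 1 = (π / 4 : ℝ) := by
  have hc : Continuous (fun s : ℝ => Lchi4 (s : ℂ)) :=
    (DirichletCharacter.differentiable_LFunction chi4_ne_one).continuous.comp
      Complex.continuous_ofReal
  have him : (Lchi4 1).im = 0 := by
    have h1 : Tendsto (fun s : ℝ => (Lchi4 (s : ℂ)).im) (𝓝[>] 1) (𝓝 (Lchi4 ((1 : ℝ) : ℂ)).im) :=
      ((Complex.continuous_im.comp hc).tendsto 1).mono_left nhdsWithin_le_nhds
    have h2 : Tendsto (fun s : ℝ => (Lchi4 (s : ℂ)).im) (𝓝[>] 1) (𝓝 0) := by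
      refine tendsto_const_nhds.congr' ?_
      filter_upwards [self_mem_nhdsWithin] with s hs
      have h3 := Complex.hasSum_im (hasSum_Lchi4 s hs)
      simp only [Complex.ofReal_im] at h3
      exact (h3.unique hasSum_zero).symm
    simpa using tendsto_nhds_unique h1 h2
  have hre : (Lchi4 1).re = π / 4 := by
    have h1 : Tendsto (fun s : ℝ => (Lchi4 (s : ℂ)).re) (𝓝[>] 1) (𝓝 (Lchi4 ((1 : ℝ) : ℂ)).re) :=
      ((Complex.continuous_re.comp hc).tendsto 1).mono_left nhdsWithin_le_nhds
    rw [Complex.ofReal_one] at h1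
    have hsum : ∀ s : ℝ, 1 < s → Tendsto (fun n => ∑ k ∈ range n,
        (-1 : ℝ) ^ k * (1 / (2 * k + 1 : ℝ) ^ s)) atTop (𝓝 (Lchi4 (s : ℂ)).re) := fun s hs => by
      have h3 := Complex.hasSum_re (hasSum_Lchi4 s hs)
      simp only [Complex.ofReal_re] at h3
      exact h3.tendsto_sum_nat
    have hanti : ∀ s : ℝ, 1 < s → Antitone (fun k : ℕ => 1 / (2 * k + 1 : ℝ) ^ s) := by
      intro s hs a b hab
      have : (a : ℝ) ≤ b := by exact_mod_cast hab
      simp only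
      apply one_div_le_one_div_of_le (by positivity)
      exact Real.rpow_le_rpow (by positivity) (by linarith) (by linarith)
    have hpart : ∀ n : ℕ, Tendsto (fun s : ℝ => ∑ k ∈ range n,
        (-1 : ℝ) ^ k * (1 / (2 * k + 1 : ℝ) ^ s)) (𝓝[>] 1)
        (𝓝 (∑ i ∈ range n, (-1 : ℝ) ^ i / (2 * i + 1))) := by
      intro n
      have : Continuous (fun s : ℝ => ∑ k ∈ range n,
        (-1 : ℝ) ^ k * (1 / (2 * k + 1 : ℝ) ^ s)) := by
        refine continuous_finsetSum _ fun k _ => ?_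
        refine continuous_const.mul (continuous_const.div ?_ fun s => by positivity)
        exact Real.continuous_const_rpow (by positivity)
      have h2 := (this.tendsto 1).mono_left (nhdsWithin_le_nhds (s := Set.Ioi 1))
      simpa [Real.rpow_one, div_eq_mul_inv] using h2
    have hpi := Real.tendsto_sum_pi_div_four
    apply le_antisymm
    · have h2 : Tendsto (fun k : ℕ => 2 * k + 1) atTop atTop :=
        tendsto_atTop_mono (fun k => by simp only [id]; omega) tendsto_id
      refine ge_of_tendsto' (hpi.comp h2) fun k => ?_
      refine le_of_tendsto_of_tendsto h1 (hpart (2 * k + 1)) ?_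
      filter_upwards [self_mem_nhdsWithin] with s hs
      exact (hanti s hs).tendsto_le_alternating_series (hsum s hs) k
    · have h2 : Tendsto (fun k : ℕ => 2 * k) atTop atTop :=
        tendsto_atTop_mono (fun k => by simp only [id]; omega) tendsto_id
      refine le_of_tendsto' (hpi.comp h2) fun k => ?_
      refine le_of_tendsto_of_tendsto (hpart (2 * k)) h1 ?_
      filter_upwards [self_mem_nhdsWithin] with s hs
      exact (hanti s hs).alternating_series_le_tendsto (hsum s hs) k
  apply Complex.ext
  · simpa using hre
  · simpa using him

lemma Lchi4_odd (k : ℕ) : Lchi4 ((2 * k + 1 : ℕ) : ℂ) =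
    (-1) ^ (k + 1) * (2 * π) ^ (2 * k + 1) / 2 / ((2 * k + 1).factorial : ℂ) *
      bb (2 * k + 1) (1 / 4) := by
  rcases Nat.eq_zero_or_pos k with rfl | hk
  · simp [Lchi4_one, bb]
    ring
  · have h1 := hasSum_one_div_nat_pow_mul_sin hk.ne' (x := 1 / 4) ⟨by norm_num, by norm_num⟩
    have h2 := hasSum_Lchi4 (2 * k + 1 : ℕ) (by norm_cast; omega)
    have hinj : Function.Injective (fun k : ℕ => 2 * k + 1) := fun a b h => by
      simp only at h; omega
    rw [← hinj.hasSum_iff] at h1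
    · have h3 := Complex.hasSum_ofReal.2 h1
      have h4 := h2.unique (h3.congr_fun fun n => ?_)
      · have h5 := bb_real (2 * k + 1) (1 / 4)
        unfold bernoulliFun at h5
        rw [Complex.ofReal_natCast] at h4
        rw [h4, Complex.ofReal_mul, h5]
        push_cast
        ring
      · congr 1
        simp only [Function.comp]
        rw [Real.rpow_natCast]
        rw [show 2 * π * ((2 * n + 1 : ℕ) : ℝ) * (1 / 4) = π / 2 + n * π by push_cast; ring,
          Real.sin_add_nat_mul_pi]
        push_cast
        simp
        ring
    · intro n hn
      have : ∃ k, n = 2 * k := by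
        rcases Nat.even_or_odd' n with ⟨k, h | h⟩
        · exact ⟨k, h⟩
        · exact absurd ⟨k, h.symm⟩ hn
      obtain ⟨m, rfl⟩ := this
      rw [show 2 * π * ((2 * m : ℕ) : ℝ) * (1 / 4) = m * π by push_cast; ring, Real.sin_nat_mul_pi]
      simp

lemma LamI_eq (n : ℕ) :
    LamI n = -(2 * π * Complex.I) ^ n * (bb n (1 / 4) / (n.factorial : ℂ)) := by
  rcases Nat.even_or_odd' n with ⟨k, rfl | rfl⟩
  · rw [LamI, if_pos (by simp), bb_quarter_even]
    have hz := riemannZeta_two_mul_nat' (k := k)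
    have h3 : (2 * π * Complex.I : ℂ) ^ (2 * k) = 2 ^ (2 * k) * π ^ (2 * k) * (-1) ^ k := by
      rw [mul_pow, mul_pow, pow_mul Complex.I, Complex.I_sq]
    have h4 : (2 : ℂ) ^ (2 * (k : ℤ)) = 2 ^ (2 * k) := by norm_cast
    push_cast
    rw [hz, zpow_sub₀ two_ne_zero, zpow_sub₀ two_ne_zero, h3, h4, pow_succ, zpow_one]
    field_simp
  · rw [LamI, if_neg (by simp), Lchi4_odd]
    have h3 : (2 * π * Complex.I : ℂ) ^ (2 * k + 1) =
        (2 * π) ^ (2 * k + 1) * ((-1) ^ k * Complex.I) := by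
      rw [mul_pow _ Complex.I, pow_succ Complex.I, pow_mul Complex.I, Complex.I_sq]
    rw [h3]
    ring

lemma LamNegI_eq (n : ℕ) :
    LamNegI n = -(2 * π * Complex.I) ^ n * (bb n (3 / 4) / (n.factorial : ℂ)) := by
  have h : LamNegI n = (-1) ^ n * LamI n := by
    unfold LamNegI LamI
    split_ifs with h
    · rw [h.neg_one_pow, one_mul]
    · rw [(Nat.not_even_iff_odd.1 h).neg_one_pow]
      ring
  rw [h, LamI_eq, bb_one_sub]
  ring

/-- Lemma 6.1 of Komori–Matsumoto–Tsumura. -/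
theorem sum_phi_eps_quarter (p : ℕ) (hp : 0 < p) (h : ℕ → ℂ) :
    (∑ j ∈ range (p + 1), phi ((p - j : ℕ) : ℂ) * eps (p - j) *
        ∑ ξ ∈ range (j + 1),
          h (j - ξ) * (-(Complex.I * (π : ℂ)) / 2) ^ ξ / (Nat.factorial ξ : ℂ) =
      (1 / 2) * ∑ ξ ∈ range (p + 1), LamI ξ * h (p - ξ)) ∧
    (∑ j ∈ range (p + 1), phi ((p - j : ℕ) : ℂ) * eps (p - j) *
        ∑ ξ ∈ range (j + 1),
          h (j - ξ) * ((Complex.I * (π : ℂ)) / 2) ^ ξ / (Nat.factorial ξ : ℂ) =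
      (1 / 2) * ∑ ξ ∈ range (p + 1), LamNegI ξ * h (p - ξ)) := by
  have key : ∀ (s : ℂ) (L : ℕ → ℂ), (∀ n, L n =
      -(2 * π * Complex.I) ^ n * (bb n (1 / 2 + s) / (n.factorial : ℂ))) →
      ∑ j ∈ range (p + 1), phi ((p - j : ℕ) : ℂ) * eps (p - j) *
        ∑ ξ ∈ range (j + 1),
          h (j - ξ) * (2 * π * Complex.I * s) ^ ξ / (Nat.factorial ξ : ℂ) =
      (1 / 2) * ∑ ξ ∈ range (p + 1), L ξ * h (p - ξ) := by
    intro s L hL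
    have h1 := rearr p (fun m => phi (m : ℂ) * eps m)
      (fun ξ => (2 * π * Complex.I * s) ^ ξ / (Nat.factorial ξ : ℂ)) h
    simp only [sum_phi] at h1
    simp only [← mul_div_assoc] at h1
    rw [h1, Finset.mul_sum]
    refine Finset.sum_congr rfl fun n _ => ?_
    rw [hL]
    ring
  constructor
  · rw [show -(Complex.I * (π : ℂ)) / 2 = 2 * π * Complex.I * (-1 / 4) by ring]
    refine key _ _ fun n => ?_
    rw [LamI_eq]
    norm_num
  · rw [show (Complex.I * (π : ℂ)) / 2 = 2 * π * Complex.I * (1 / 4) by ring]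
    refine key _ _ fun n => ?_
    rw [LamNegI_eq]
    norm_num
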